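/- Let S*, S₁ ⊆ ℝ^d be measurable sets with P_{(x,y)∼D}[x ∈ (S*)^c] > 0 and P_{(x,y)∼D}[x ∈ S₁] > 0, and let α ≥ 0, ε > 0. If P_{(x,y)∼D}[y = 1] ≥ P_{(x,y)∼D}[x ∈ (S*)^c], |P_{(x,y)∼D}[x ∈ S₁] − P_{(x,y)∼D}[x ∈ (S*)^c]| ≤ ε, and err_{D|S₁}(S₁^c) ≤ (1+α) · err_{D|(S*)^c}(S*), then err_D(S₁^c) ≤ (1+α) · (err_D(S*) + 3ε). -/

import Mathlib

open MeasureTheory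

/-- Classification loss `err_D(S) = P_{(x,y)∼D}[y = 1[x ∈ S]]`. -/
noncomputable def errD {d : ℕ} (μ : Measure (EuclideanSpace ℝ (Fin d) × ℝ))
    (S : Set (EuclideanSpace ℝ (Fin d))) : ℝ :=
  (μ {p | p.2 = S.indicator (fun _ => (1 : ℝ)) p.1}).toReal

/-- Conditional classification loss `err_{D|T}(S) = P_{(x,y)∼D}[y = 1[x ∈ S] | x ∈ T]`. -/
noncomputable def errCond {d : ℕ} (μ : Measure (EuclideanSpace ℝ (Fin d) × ℝ))
    (T S : Set (EuclideanSpace ℝ (Fin d))) : ℝ :=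
  (μ {p | p.2 = S.indicator (fun _ => (1 : ℝ)) p.1 ∧ p.1 ∈ T}).toReal /
    (μ {p | p.1 ∈ T}).toReal

/-!
`err_D(S)` is the probability that `y` agrees with `1[x ∈ S]`, that is, the error of predicting the
label `1` exactly on `Sᶜ`. With `T = {x ∈ Sᶜ}` and `Y = {y = 1}` it is `P(T ∆ Y)`, and the loss
conditional on `T` is `P(T \ Y) / P(T)`. Since `P(T ∆ Y) = 2 P(T \ Y) + P(Y) - P(T)`, a
multiplicative bound on the conditional loss transfers to the loss, up to the difference between the
masses of the two predicted events. The term `P(Y) - P(T)` enters without the factor `1 + α`, which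
is harmless as long as it is nonnegative.
-/

open scoped symmDiff

lemma div_mul_le_add_abs_sub {K : Type*} [Field K] [LinearOrder K] [IsStrictOrderedRing K]
    {a t : K} (ha : 0 ≤ a) (hat : a ≤ t) (ht : 0 < t) (s : K) :
    a / t * s ≤ a + |s - t| :=
  calc a / t * s = a + a / t * (s - t) := by rw [mul_sub, div_mul_cancel₀ a ht.ne']; ring
    _ ≤ a + a / t * |s - t| := by gcongr; exact le_abs_self _
    _ ≤ a + |s - t| := by
      gcongr
      exact mul_le_of_le_one_left (abs_nonneg _) ((div_le_one ht).2 hat)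

lemma symmDiff_inter_left_eq_sdiff {Ω : Type*} (T Y : Set Ω) : T ∆ Y ∩ T = T \ Y := by
  rw [Set.inter_symmDiff_distrib_right, Set.inter_self, Set.inter_comm, Set.symmDiff_def,
    Set.sdiff_self_inter, Set.sdiff_eq_empty.2 Set.inter_subset_left, Set.union_empty]

section Events

variable {Ω : Type*} [MeasurableSpace Ω] {μ : Measure Ω} [IsFiniteMeasure μ] {S T Y : Set Ω}

lemma measureReal_symmDiff_eq_two_mul_add_sub (hT : MeasurableSet T) (hY : MeasurableSet Y) :
    μ.real (T ∆ Y) = 2 * μ.real (T \ Y) + μ.real Y - μ.real T := by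
  have hT_split := measureReal_inter_add_sdiff (μ := μ) (s := T) hY
  have hY_split := measureReal_inter_add_sdiff (μ := μ) (s := Y) hT
  rw [Set.inter_comm] at hY_split
  rw [measureReal_symmDiff_eq hT hY]
  linarith

lemma measureReal_sdiff_le_of_div_le (hS : 0 < μ.real S) (hT : 0 < μ.real T) {c : ℝ} (hc : 0 ≤ c)
    (h : μ.real (S \ Y) / μ.real S ≤ c * (μ.real (T \ Y) / μ.real T)) :
    μ.real (S \ Y) ≤ c * (μ.real (T \ Y) + |μ.real S - μ.real T|) :=
  calc μ.real (S \ Y) ≤ c * (μ.real (T \ Y) / μ.real T) * μ.real S := (div_le_iff₀ hS).1 h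
    _ = c * (μ.real (T \ Y) / μ.real T * μ.real S) := mul_assoc _ _ _
    _ ≤ c * (μ.real (T \ Y) + |μ.real S - μ.real T|) := by
      gcongr
      exact div_mul_le_add_abs_sub measureReal_nonneg (measureReal_mono Set.sdiff_subset) hT _

theorem stmt15_general (hSm : MeasurableSet S) (hTm : MeasurableSet T) (hYm : MeasurableSet Y)
    (hT : 0 < μ.real T) (hS : 0 < μ.real S) {α ε : ℝ} (hα : 0 ≤ α)
    (hTY : μ.real T ≤ μ.real Y) (hST : |μ.real S - μ.real T| ≤ ε)
    (h : μ.real (S \ Y) / μ.real S ≤ (1 + α) * (μ.real (T \ Y) / μ.real T)) :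
    μ.real (S ∆ Y) ≤ (1 + α) * (μ.real (T ∆ Y) + 3 * ε) := by
  have hε : 0 ≤ ε := (abs_nonneg _).trans hST
  have hsdiff : μ.real (S \ Y) ≤ (1 + α) * (μ.real (T \ Y) + ε) :=
    (measureReal_sdiff_le_of_div_le hS hT (by positivity) h).trans (by gcongr)
  have hmass : μ.real Y - μ.real S ≤ (1 + α) * (μ.real Y - μ.real T + ε) :=
    calc μ.real Y - μ.real S ≤ μ.real Y - μ.real T + ε := by linarith [(abs_le.1 hST).1]
      _ ≤ (1 + α) * (μ.real Y - μ.real T + ε) :=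
        le_mul_of_one_le_left (by linarith) (by linarith)
  calc μ.real (S ∆ Y) = 2 * μ.real (S \ Y) + (μ.real Y - μ.real S) := by
        rw [measureReal_symmDiff_eq_two_mul_add_sub hSm hYm, add_sub_assoc]
    _ ≤ 2 * ((1 + α) * (μ.real (T \ Y) + ε)) + (1 + α) * (μ.real Y - μ.real T + ε) := by gcongr
    _ = (1 + α) * (μ.real (T ∆ Y) + 3 * ε) := by
        rw [measureReal_symmDiff_eq_two_mul_add_sub hTm hYm]; ring

end Events

lemma setOf_snd_eq_indicator_ae_eq_symmDiff {X M : Type*} [MeasurableSpace X] [MeasurableSpace M]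
    [Zero M] [One M] [NeZero (1 : M)] {μ : Measure (X × M)}
    (hlab : ∀ᵐ p ∂μ, p.2 = 0 ∨ p.2 = 1) (S : Set X) :
    {p : X × M | p.2 = S.indicator (fun _ => 1) p.1} =ᵐ[μ]
      (Prod.fst ⁻¹' Sᶜ) ∆ {p | p.2 = 1} := by
  filter_upwards [hlab] with p hp
  refine propext (?_ : p.2 = S.indicator (fun _ => 1) p.1 ↔ p ∈ (Prod.fst ⁻¹' Sᶜ) ∆ {p | p.2 = 1})
  by_cases hpS : p.1 ∈ S <;> rcases hp with hp | hp <;> simp [Set.mem_symmDiff, hpS, hp]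

section Loss

variable {d : ℕ} {μ : Measure (EuclideanSpace ℝ (Fin d) × ℝ)}

lemma errD_eq_measureReal_symmDiff (hlab : ∀ᵐ p ∂μ, p.2 = 0 ∨ p.2 = 1)
    (S : Set (EuclideanSpace ℝ (Fin d))) :
    errD μ S = μ.real ((Prod.fst ⁻¹' Sᶜ) ∆ {p | p.2 = 1}) :=
  measureReal_congr (setOf_snd_eq_indicator_ae_eq_symmDiff hlab S)

lemma errCond_eq_measureReal_symmDiff_inter_div (hlab : ∀ᵐ p ∂μ, p.2 = 0 ∨ p.2 = 1)
    (T S : Set (EuclideanSpace ℝ (Fin d))) :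
    errCond μ T S =
      μ.real ((Prod.fst ⁻¹' Sᶜ) ∆ {p | p.2 = 1} ∩ Prod.fst ⁻¹' T) / μ.real (Prod.fst ⁻¹' T) :=
  congrArg (· / μ.real (Prod.fst ⁻¹' T))
    (measureReal_congr ((setOf_snd_eq_indicator_ae_eq_symmDiff hlab S).inter (ae_eq_refl _)))

end Loss

/-- multiplicative reduction, Case II: `P[y=1] ≥ P[x ∉ S*]`: if
`|P[x ∈ S₁] − P[x ∈ (S*)ᶜ]| ≤ ε` and `err_{D|S₁}(S₁ᶜ) ≤ (1+α)·err_{D|(S*)ᶜ}(S*)` then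
`err_D(S₁ᶜ) ≤ (1+α)·(err_D(S*) + 3ε)`. -/
theorem stmt15 (d : ℕ)
    (μ : Measure (EuclideanSpace ℝ (Fin d) × ℝ)) [IsProbabilityMeasure μ]
    (hlab : ∀ᵐ p ∂μ, p.2 = 0 ∨ p.2 = 1)
    (Sstar S₁ : Set (EuclideanSpace ℝ (Fin d)))
    (hSstar : MeasurableSet Sstar) (hS₁ : MeasurableSet S₁)
    (hpos : 0 < (μ {p | p.1 ∈ Sstarᶜ}).toReal) (hpos₁ : 0 < (μ {p | p.1 ∈ S₁}).toReal)
    (α ε : ℝ) (hα : 0 ≤ α) (hε : 0 < ε)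
    (hcase : (μ {p | p.1 ∈ Sstarᶜ}).toReal ≤ (μ {p | p.2 = 1}).toReal)
    (hclose : |(μ {p | p.1 ∈ S₁}).toReal - (μ {p | p.1 ∈ Sstarᶜ}).toReal| ≤ ε)
    (herr : errCond μ S₁ S₁ᶜ ≤ (1 + α) * errCond μ Sstarᶜ Sstar) :
    errD μ S₁ᶜ ≤ (1 + α) * (errD μ Sstar + 3 * ε) := by
  simp only [errD_eq_measureReal_symmDiff hlab, errCond_eq_measureReal_symmDiff_inter_div hlab,
    compl_compl, symmDiff_inter_left_eq_sdiff] at herr ⊢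
  exact stmt15_general (measurable_fst hS₁) (measurable_fst hSstar.compl)
    (measurable_snd (measurableSet_singleton 1)) hpos hpos₁ hα hcase hclose herr
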